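/- arXiv:1603.07116 — 3 statements merged into one kernel-verified Lean document; each statement's English description precedes it below -/
import Mathlib

section
/- Let -1/2 ≤ α < 1 and let f ∈ F(α). Then there exists a probability measure ν on [0, 2π] such that for all z ∈ 𝔻, f'(z) = ∫₀^{2π} (1 - e^{iθ} z)^{2α-2} dν(θ), where w ↦ w^{2α-2} denotes the principal branch of the complex power (well defined since Re(1 - e^{iθ}z) > 0 for |z| < 1). -/
open Complex MeasureTheory Metric Set Real

/-- The class `F(α)`. -/
def zalcF (α : ℝ) : Set (ℂ → ℂ) :=
  {f | AnalyticOn ℂ f (ball 0 1) ∧ f 0 = 0 ∧ deriv f 0 = 1 ∧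
       (∀ z ∈ ball (0:ℂ) 1, deriv f z ≠ 0) ∧
       (∀ z ∈ ball (0:ℂ) 1, α < (1 + z * deriv (deriv f) z / deriv f z).re)}

open Filter Topology ProbabilityTheory

lemma aux_closure {E : Type*} [MetricSpace E] [MeasurableSpace E] [BorelSpace E]
    {K : Set E} (hK : IsCompact K) (S : Set ℂ) (k : ℂ → E → ℂ)
    (hk : ∀ z ∈ S, ContinuousOn (k z) K) (μ : ℕ → Measure E)
    (hμ : ∀ n, IsProbabilityMeasure (μ n)) (hμK : ∀ n, μ n Kᶜ = 0) (g : ℂ → ℂ)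
    (h : ∀ z ∈ S, Tendsto (fun n => ∫ x, k z x ∂(μ n)) atTop (𝓝 (g z))) :
    ∃ ν : Measure E, IsProbabilityMeasure ν ∧ ν Kᶜ = 0 ∧ ∀ z ∈ S, g z = ∫ x, k z x ∂ν := by
  have : CompactSpace K := isCompact_iff_compactSpace.mp hK
  have hKm : MeasurableSet K := hK.isClosed.measurableSet
  have hemb : MeasurableEmbedding (Subtype.val : K → E) := MeasurableEmbedding.subtype_coe hKm
  have hres : ∀ n, (μ n).restrict K = μ n := fun n =>
    Measure.restrict_eq_self_of_ae_mem (by rw [ae_iff]; exact hμK n)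
  have hp : ∀ n, IsProbabilityMeasure ((μ n).comap (Subtype.val : K → E)) := by
    intro n
    constructor
    rw [hemb.comap_apply]
    simp only [image_univ, Subtype.range_coe_subtype, ofPred_mem_eq]
    have := hμ n
    exact (prob_compl_eq_zero_iff hKm).mp (hμK n)
  let P : ℕ → ProbabilityMeasure K := fun n => ⟨(μ n).comap (Subtype.val : K → E), hp n⟩
  obtain ⟨Q, -, φ, hφ, hQ⟩ := (isCompact_univ (X := ProbabilityMeasure K)).tendsto_subseq (x := P) (fun n => mem_univ _)
  refine ⟨(Q : Measure K).map Subtype.val, Measure.isProbabilityMeasure_map (by fun_prop), ?_, ?_⟩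
  · rw [hemb.map_apply]
    simp
  · intro z hz
    rw [hemb.integral_map]
    have hc : Continuous (fun x : K => k z x) := continuousOn_iff_continuous_domRestrict.mp (hk z hz)
    have hcr : Continuous (fun x : K => (k z x).re) := Complex.continuous_re.comp hc
    have hci : Continuous (fun x : K => (k z x).im) := Complex.continuous_im.comp hc
    have key := ProbabilityMeasure.tendsto_iff_forall_integral_tendsto.mp hQ
    have k1 := key (BoundedContinuousFunction.mkOfCompact ⟨_, hcr⟩)
    have k2 := key (BoundedContinuousFunction.mkOfCompact ⟨_, hci⟩)
    have hintg : ∀ R : ProbabilityMeasure K, Integrable (fun x : K => k z x) (R : Measure K) := fun R =>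
      (BoundedContinuousFunction.mkOfCompact ⟨_, hc⟩).integrable _
    have k3 : Tendsto (fun n => ∫ x : K, k z x ∂(P (φ n) : Measure K)) atTop
        (𝓝 (∫ x : K, k z x ∂(Q : Measure K))) := by
      have e : ∀ R : ProbabilityMeasure K, ∫ x : K, k z x ∂(R : Measure K) =
          ((∫ x : K, (k z x).re ∂(R : Measure K) : ℝ) : ℂ) + ((∫ x : K, (k z x).im ∂(R : Measure K) : ℝ) : ℂ) * I := by
        intro R
        exact (integral_re_add_im (hintg R)).symm
      simp_rw [e]
      exact ((Complex.continuous_ofReal.tendsto _).comp k1).add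
        (((Complex.continuous_ofReal.tendsto _).comp k2).mul_const I)
    have k4 : Tendsto (fun n => ∫ x : K, k z x ∂(P (φ n) : Measure K)) atTop (𝓝 (g z)) := by
      have := (h z hz).comp hφ.tendsto_atTop
      refine this.congr (fun n => ?_)
      simp only [Function.comp]
      change _ = ∫ x : K, k z x ∂((μ (φ n)).comap (Subtype.val : K → E))
      rw [integral_subtype_comap hKm, hres]
    exact tendsto_nhds_unique k4 k3

lemma aux_dens {X : Type*} [MeasurableSpace X] (m : Measure X) (q : X → ℝ)
    (hq : Measurable q) (hq0 : ∀ᵐ x ∂m, 0 ≤ q x) (φ : X → ℂ) :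
    ∫ x, φ x ∂(m.withDensity (fun x => ENNReal.ofReal (q x))) = ∫ x, (q x : ℂ) * φ x ∂m := by
  rw [integral_withDensity_eq_integral_toReal_smul (by fun_prop) (by simp)]
  apply integral_congr_ae
  filter_upwards [hq0] with x hx
  rw [ENNReal.toReal_ofReal hx, Complex.real_smul]

lemma aux_dens_prob {X : Type*} [MeasurableSpace X] (m : Measure X) (q : X → ℝ)
    (hq : Integrable q m) (hq0 : ∀ᵐ x ∂m, 0 ≤ q x) (h1 : ∫ x, q x ∂m = 1) :
    IsProbabilityMeasure (m.withDensity (fun x => ENNReal.ofReal (q x))) := by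
  constructor
  rw [withDensity_apply _ MeasurableSet.univ, Measure.restrict_univ,
    ← ofReal_integral_eq_lintegral_ofReal hq hq0, h1, ENNReal.ofReal_one]
lemma aux_cpow_succ {x : ℂ} (hx : x ≠ 0) (c : ℂ) : x ^ (c + 1) = x ^ c * x := by
  rw [Complex.cpow_add _ _ hx, Complex.cpow_one]

lemma aux_beta_ae (p q : ℝ) : ∀ᵐ s ∂(betaMeasure p q), 0 < s ∧ s < 1 := by
  rw [betaMeasure, ae_withDensity_iff (by unfold betaPDF; fun_prop)]
  filter_upwards with s hs
  by_contra h
  apply hs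
  rw [betaPDF_eq, if_neg h, ENNReal.ofReal_zero]

lemma aux_beta_int {p q : ℝ} (hp : 0 < p) (hq : 0 < q) (φ : ℝ → ℂ) :
    ∫ s, φ s ∂(betaMeasure p q) =
      ∫ s in (0:ℝ)..1, ((1 / beta p q : ℝ) : ℂ) * (((s ^ (p-1) * (1 - s)^(q-1) : ℝ) : ℂ) * φ s) := by
  have h0 : ∀ s, 0 ≤ betaPDFReal p q s := by
    intro s
    by_cases h : 0 < s ∧ s < 1
    · exact (betaPDFReal_pos h.1 h.2 hp hq).le
    · rw [betaPDFReal, if_neg h]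
  have := aux_dens volume (betaPDFReal p q) (by fun_prop) (Eventually.of_forall h0) φ
  unfold betaMeasure betaPDF
  rw [this, intervalIntegral.integral_of_le zero_le_one, integral_Ioc_eq_integral_Ioo,
    ← integral_indicator measurableSet_Ioo]
  congr 1
  ext s
  by_cases h : s ∈ Ioo (0:ℝ) 1
  · rw [indicator_of_mem h, betaPDFReal, if_pos (show 0 < s ∧ s < 1 from h)]
    push_cast
    ring
  · rw [indicator_of_notMem h, betaPDFReal, if_neg (show ¬ (0 < s ∧ s < 1) from h)]
    simp

lemma aux_L_re {a b : ℂ} {δ : ℝ} (ha : δ ≤ a.re) (hb : δ ≤ b.re) {s : ℝ}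
    (hs : 0 ≤ s) (hs' : s ≤ 1) : δ ≤ ((s:ℂ) * a + (1 - s) * b).re := by
  have : ((s:ℂ) * a + (1 - s) * b).re = s * a.re + (1 - s) * b.re := by simp
  rw [this]
  nlinarith [mul_nonneg hs (sub_nonneg.2 ha), mul_nonneg (sub_nonneg.2 hs') (sub_nonneg.2 hb)]

lemma aux_cpow_bound {w : ℂ} {δ r : ℝ} (hδ : 0 < δ) (hr : 0 ≤ r) (h : δ ≤ w.re) :
    ‖w ^ (-(r:ℂ))‖ ≤ δ ^ (-r) := by
  have := norm_cpow_real w (-r)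
  push_cast at this
  rw [this]
  exact Real.rpow_le_rpow_of_nonpos hδ (h.trans (Complex.re_le_norm w)) (by linarith)

/-- integration by parts identity -/
lemma aux_beta_ibp {p q : ℝ} (hp : 0 < p) (hq : 0 < q) {a b : ℂ} (ha : 0 < a.re) (hb : 0 < b.re) :
    ∫ s, ((s:ℂ) * a + (1 - s) * b) ^ (-((p + q + 1 : ℝ):ℂ)) * (p * (1 - s) * b - q * s * a)
      ∂(betaMeasure p q) = 0 := by
  rw [aux_beta_int hp hq, intervalIntegral.integral_const_mul]
  apply mul_eq_zero_of_right
  have hslit : ∀ s ∈ Icc (0:ℝ) 1, ((s:ℂ) * a + (1 - s) * b) ∈ slitPlane := by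
    intro s hs
    left
    exact lt_of_lt_of_le (lt_min ha hb) (aux_L_re (min_le_left _ _) (min_le_right _ _) hs.1 hs.2)
  have hLc : Continuous (fun s : ℝ => (s:ℂ) * a + (1 - s) * b) := by fun_prop
  have hpc : ∀ c : ℂ, ContinuousOn (fun s : ℝ => ((s:ℂ) * a + (1 - s) * b) ^ c) (Icc 0 1) := by
    intro c
    exact hLc.continuousOn.cpow_const hslit
  have key := intervalIntegral.integral_eq_sub_of_hasDerivAt_of_le (a := 0) (b := 1) zero_le_one
    (f := fun s : ℝ => ((s ^ p * (1 - s) ^ q : ℝ) : ℂ) * ((s:ℂ) * a + (1 - s) * b) ^ (-((p + q : ℝ):ℂ)))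
    (f' := fun s : ℝ => ((s ^ (p-1) * (1 - s)^(q-1) : ℝ) : ℂ) * (((s:ℂ) * a + (1 - s) * b) ^ (-((p + q + 1 : ℝ):ℂ)) * (p * (1 - s) * b - q * s * a)))
    ?_ ?_ ?_
  · rw [key]
    simp [Real.zero_rpow hp.ne', Real.zero_rpow hq.ne']
  · apply ContinuousOn.mul _ (hpc _)
    apply Continuous.continuousOn
    apply Complex.continuous_ofReal.comp
    exact (Real.continuous_rpow_const hp.le).mul
      ((Real.continuous_rpow_const hq.le).comp (by fun_prop))
  · intro s hs
    have h1 : HasDerivAt (fun s : ℝ => s ^ p * (1 - s) ^ q)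
        (p * s ^ (p - 1) * (1 - s) ^ q + s ^ p * ((-1) * q * (1 - s) ^ (q - 1))) s := by
      have e1 := Real.hasDerivAt_rpow_const (x := s) (p := p) (Or.inl hs.1.ne')
      have e2 := ((hasDerivAt_id s).const_sub 1).rpow_const (p := q) (Or.inl (by simp; linarith [hs.2]))
      exact e1.mul e2
    have h2 : HasDerivAt (fun s : ℝ => (s:ℂ) * a + (1 - s) * b) (a - b) s := by
      have := ((Complex.ofRealCLM.hasDerivAt (x := s)).mul_const a).add
        (((Complex.ofRealCLM.hasDerivAt (x := s)).const_sub 1).mul_const b)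
      convert! this using 1
      simp; ring
    have h3 := (hasStrictDerivAt_id _).cpow_const (c := (-((p + q : ℝ):ℂ))) (hslit s ⟨hs.1.le, hs.2.le⟩)
    have h4 := h3.hasDerivAt.comp s h2
    have h5 := h1.ofReal_comp.mul h4
    convert! h5 using 1
    have hL0 := slitPlane_ne_zero (hslit s ⟨hs.1.le, hs.2.le⟩)
    have hs0 : (0:ℝ) < s := hs.1
    have hs1 : 0 < 1 - s := by linarith [hs.2]
    simp only [id, Function.comp]
    set L := (s:ℂ) * a + (1 - s) * b with hL
    have e1 : L ^ (-((p + q : ℝ):ℂ)) = L ^ (-((p + q + 1 : ℝ):ℂ)) * L := by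
      
      rw [← aux_cpow_succ hL0]
      congr 1; push_cast; ring
    have e2 : -((p + q : ℝ):ℂ) - 1 = (-((p + q + 1 : ℝ):ℂ)) := by push_cast; ring
    rw [e2, e1]
    have e3 : s ^ p = s ^ (p - 1) * s := by rw [← Real.rpow_add_one hs0.ne']; ring_nf
    have e4 : (1 - s) ^ q = (1 - s) ^ (q - 1) * (1 - s) := by rw [← Real.rpow_add_one hs1.ne']; ring_nf
    rw [e3, e4]
    push_cast
    generalize L ^ (-((p:ℂ) + q + 1)) = M
    rw [hL]
    ring
  · have hb := betaIntegral_convergent (u := p) (v := q) (by simpa) (by simpa)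
    have hb2 : IntervalIntegrable (fun s : ℝ => ((s ^ (p-1) * (1 - s)^(q-1) : ℝ) : ℂ)) volume 0 1 := by
      refine hb.congr ?_
      intro s hs
      rw [uIoc_of_le zero_le_one] at hs
      have h1 : 0 ≤ 1 - s := by linarith [hs.2]
      simp only
      rw [Complex.ofReal_mul, Complex.ofReal_cpow hs.1.le, Complex.ofReal_cpow h1]
      push_cast
      rfl
    apply hb2.mul_continuousOn
    rw [uIcc_of_le zero_le_one]
    apply (hpc _).mul
    fun_prop
lemma aux_L_meas (a b : ℂ) : Measurable (fun s : ℝ => (s:ℂ) * a + (1 - s) * b) := by fun_prop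

lemma aux_L_int {p q : ℝ} (hp : 0 < p) (hq : 0 < q) {a b : ℂ} (ha : 0 < a.re) (hb : 0 < b.re)
    {r : ℝ} (hr : 0 ≤ r) (ψ : ℝ → ℂ) (hψ : Measurable ψ) (C : ℝ)
    (hC : ∀ s ∈ Ioo (0:ℝ) 1, ‖ψ s‖ ≤ C) :
    Integrable (fun s : ℝ => ((s:ℂ) * a + (1 - s) * b) ^ (-(r:ℂ)) * ψ s) (betaMeasure p q) := by
  have := isProbabilityMeasureBeta hp hq
  refine Integrable.of_bound (C := (min a.re b.re) ^ (-r) * C) ?_ ?_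
  · exact (((aux_L_meas a b).pow_const _).mul hψ).aestronglyMeasurable
  · filter_upwards [aux_beta_ae p q] with s hs
    rw [norm_mul]
    have h1 := aux_cpow_bound (lt_min ha hb) hr (aux_L_re (min_le_left a.re b.re) (min_le_right a.re b.re) hs.1.le hs.2.le)
    exact mul_le_mul h1 (hC s hs) (norm_nonneg _) (Real.rpow_nonneg (lt_min ha hb).le _)

lemma aux_J_deriv {p q : ℝ} (hp : 0 < p) (hq : 0 < q) {a b : ℂ} (ha : 0 < a.re) (hb : 0 < b.re) :
    HasDerivAt (fun a : ℂ => ∫ s, ((s:ℂ) * a + (1 - s) * b) ^ (-((p + q : ℝ):ℂ)) ∂(betaMeasure p q))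
      (∫ s, ((s:ℂ) * a + (1 - s) * b) ^ (-((p + q + 1 : ℝ):ℂ)) * (-((p + q : ℝ):ℂ) * s) ∂(betaMeasure p q)) a := by
  have := isProbabilityMeasureBeta hp hq
  set δ := min (a.re / 2) b.re with hδ
  have hδ0 : 0 < δ := lt_min (by linarith) hb
  have hnear : ∀ x ∈ ball a (a.re / 2), a.re / 2 ≤ x.re := by
    intro x hx
    rw [mem_ball, dist_eq_norm] at hx
    have := (Complex.abs_re_le_norm (x - a)).trans hx.le
    rw [abs_le, Complex.sub_re] at this
    linarith [this.1]
  refine (hasDerivAt_integral_of_dominated_loc_of_deriv_le (s := ball a (a.re / 2))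
    (F := fun (x : ℂ) (s : ℝ) => ((s:ℂ) * x + (1 - s) * b) ^ (-((p + q : ℝ):ℂ)))
    (F' := fun (x : ℂ) (s : ℝ) => ((s:ℂ) * x + (1 - s) * b) ^ (-((p + q + 1 : ℝ):ℂ)) * (-((p + q : ℝ):ℂ) * s))
    (bound := fun _ => δ ^ (-(p + q + 1)) * (p + q))
    (ball_mem_nhds a (by linarith)) ?_ ?_ ?_ ?_ ?_ ?_).2
  · filter_upwards with x
    exact ((aux_L_meas x b).pow_const _).aestronglyMeasurable
  · have := aux_L_int hp hq ha hb (r := p + q) (by positivity) (fun _ => 1) (by fun_prop) 1 (by simp)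
    simpa using this
  · exact (((aux_L_meas a b).pow_const _).mul (by fun_prop)).aestronglyMeasurable
  · filter_upwards [aux_beta_ae p q] with s hs x hx
    rw [norm_mul]
    have h1 := aux_cpow_bound hδ0 (r := p + q + 1) (by positivity)
      (aux_L_re ((min_le_left _ _).trans (hnear x hx)) (min_le_right _ _) hs.1.le hs.2.le)
    refine mul_le_mul h1 ?_ (norm_nonneg _) (Real.rpow_nonneg hδ0.le _)
    rw [norm_mul, norm_neg, Complex.norm_real, Complex.norm_real, Real.norm_of_nonneg (by positivity),
      Real.norm_of_nonneg hs.1.le]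
    have : 0 < p + q := by positivity
    nlinarith [hs.2]
  · exact integrable_const _
  · filter_upwards [aux_beta_ae p q] with s hs x hx
    have hL : ((s:ℂ) * x + (1 - s) * b) ∈ slitPlane := by
      left
      exact lt_of_lt_of_le hδ0
        (aux_L_re ((min_le_left _ _).trans (hnear x hx)) (min_le_right _ _) hs.1.le hs.2.le)
    have h2 : HasDerivAt (fun x : ℂ => (s:ℂ) * x + (1 - s) * b) s x := by
      simpa using ((hasDerivAt_id x).const_mul (s:ℂ)).add_const ((1 - s) * b)
    have h3 := h2.cpow_const (c := (-((p + q : ℝ):ℂ))) hL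
    convert! h3 using 1
    have e2 : -((p + q : ℝ):ℂ) - 1 = (-((p + q + 1 : ℝ):ℂ)) := by push_cast; ring
    rw [e2]
    ring

lemma aux_feynman {p q : ℝ} (hp : 0 < p) (hq : 0 < q) {a b : ℂ} (ha : 0 < a.re) (hb : 0 < b.re) :
    ∫ s, ((s:ℂ) * a + (1 - s) * b) ^ (-((p + q : ℝ):ℂ)) ∂(betaMeasure p q)
      = a ^ (-(p:ℂ)) * b ^ (-(q:ℂ)) := by
  have hprob := isProbabilityMeasureBeta hp hq
  set J : ℂ → ℂ := fun a : ℂ => ∫ s, ((s:ℂ) * a + (1 - s) * b) ^ (-((p + q : ℝ):ℂ)) ∂(betaMeasure p q) with hJ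
  set U : Set ℂ := {x | 0 < x.re} with hU
  have hUo : IsOpen U := isOpen_lt continuous_const Complex.continuous_re
  have hUc : Convex ℝ U := convex_halfSpace_re_gt 0
  have hd : ∀ x ∈ U, HasDerivAt (fun x => J x * x ^ (p:ℂ)) 0 x := by
    intro x hx
    have hx' : 0 < x.re := hx
    have h1 := aux_J_deriv hp hq hx' hb
    have h2 := (hasDerivAt_id x).cpow_const (c := (p:ℂ)) (Or.inl hx)
    have h3 := h1.mul h2
    convert! h3 using 1
    have hx0 : x ≠ 0 := by rintro rfl; simp at hx'
    have key := aux_beta_ibp hp hq hx' hb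
    have i1 := aux_L_int hp hq hx' hb (r := p + q + 1) (by positivity)
      (fun s => -((p + q : ℝ):ℂ) * s) (by fun_prop) (p + q) (by
        intro s hs
        rw [norm_mul, norm_neg, Complex.norm_real, Complex.norm_real, Real.norm_of_nonneg (by positivity),
          Real.norm_of_nonneg hs.1.le]
        have : 0 < p + q := by positivity
        nlinarith [hs.2])
    have i2 := aux_L_int hp hq hx' hb (r := p + q) (by positivity) (fun _ => 1) (by fun_prop) 1 (by simp)
    simp only [mul_one] at i2
    have e : x * (∫ s, ((s:ℂ) * x + (1 - s) * b) ^ (-((p + q + 1 : ℝ):ℂ)) * (-((p + q : ℝ):ℂ) * s) ∂(betaMeasure p q))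
        + p * J x = 0 := by
      rw [← key, hJ]
      simp only
      rw [← integral_const_mul, ← integral_const_mul, ← integral_add (i1.const_mul _) (i2.const_mul _)]
      apply integral_congr_ae
      filter_upwards [aux_beta_ae p q] with s hs
      have hL0 : (s:ℂ) * x + (1 - s) * b ≠ 0 := by
        have := lt_of_lt_of_le (lt_min hx' hb) (aux_L_re (min_le_left _ _) (min_le_right _ _) hs.1.le hs.2.le)
        intro h
        rw [h] at this
        simp at this
      set L := (s:ℂ) * x + (1 - s) * b with hL
      have e1 : L ^ (-((p + q : ℝ):ℂ)) = L ^ (-((p + q + 1 : ℝ):ℂ)) * L := by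
        rw [← aux_cpow_succ hL0]
        congr 1; push_cast; ring
      rw [e1]
      generalize L ^ (-((p + q + 1 : ℝ):ℂ)) = M
      rw [hL]
      push_cast
      ring
    have e5 : x ^ (p:ℂ) = x ^ ((p:ℂ) - 1) * x := by
      rw [← aux_cpow_succ hx0]
      congr 1; ring
    simp only [id]
    rw [e5]
    linear_combination (-(x ^ ((p:ℂ) - 1))) * e
  have hconst : J a * a ^ (p:ℂ) = J b * b ^ (p:ℂ) := by
    apply hUo.is_const_of_deriv_eq_zero hUc.isPreconnected (f := fun x => J x * x ^ (p:ℂ)) _ _ ha hb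
    · intro x hx
      exact (hd x hx).differentiableAt.differentiableWithinAt
    · intro x hx
      exact (hd x hx).deriv
  have ha0 : a ≠ 0 := by rintro rfl; simp at ha
  have hb0 : b ≠ 0 := by rintro rfl; simp at hb
  have hJb : J b = b ^ (-((p + q : ℝ):ℂ)) := by
    have : ∀ s : ℝ, (s:ℂ) * b + (1 - s) * b = b := fun s => by ring
    simp only [hJ, this, integral_const, probReal_univ, one_smul]
  change J a = _
  rw [hJb, ← Complex.cpow_add _ _ hb0] at hconst
  have h6 : J a = b ^ (-(q:ℂ)) / a ^ (p:ℂ) := by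
    rw [eq_div_iff (by simp [Complex.cpow_eq_zero_iff, ha0]), hconst]
    congr 1; push_cast; ring
  rw [h6, Complex.cpow_neg a]
  ring
def IsD (r : ℝ) (g : ℂ → ℂ) : Prop :=
  ∃ μ : Measure ℂ, IsProbabilityMeasure μ ∧ μ (closedBall 0 1)ᶜ = 0 ∧
    ∀ z ∈ ball (0:ℂ) 1, g z = ∫ w, (1 - w * z) ^ (-(r:ℂ)) ∂μ

lemma aux_re_lb {w z : ℂ} (hw : ‖w‖ ≤ 1) : 1 - ‖z‖ ≤ (1 - w * z).re := by
  have h := (Complex.re_le_norm (w * z)).trans (norm_mul_le w z)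
  have : ‖w‖ * ‖z‖ ≤ 1 * ‖z‖ := by gcongr
  simp only [Complex.sub_re, Complex.one_re]
  linarith

lemma aux_ker_bound {w z : ℂ} (hw : ‖w‖ ≤ 1) (hz : ‖z‖ < 1) {r : ℝ} (hr : 0 ≤ r) :
    ‖(1 - w * z) ^ (-(r:ℂ))‖ ≤ (1 - ‖z‖) ^ (-r) :=
  aux_cpow_bound (by linarith) hr (aux_re_lb hw)

lemma aux_ker_meas (z : ℂ) (c : ℂ) : Measurable (fun w : ℂ => (1 - w * z) ^ c) := by fun_prop

lemma aux_ae_ball {μ : Measure ℂ} (h : μ (closedBall 0 1)ᶜ = 0) : ∀ᵐ w ∂μ, ‖w‖ ≤ 1 := by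
  rw [ae_iff]
  convert h using 2
  ext w
  simp

lemma IsD.mul {p q : ℝ} (hp : 0 < p) (hq : 0 < q) {g h : ℂ → ℂ} (hg : IsD p g) (hh : IsD q h) :
    IsD (p + q) (fun z => g z * h z) := by
  obtain ⟨μ, hμ, hμ0, hg⟩ := hg
  obtain ⟨ν, hν, hν0, hh⟩ := hh
  have hβ := isProbabilityMeasureBeta hp hq
  have hm : Measurable (fun t : (ℂ × ℂ) × ℝ => (t.2 : ℂ) * t.1.1 + (1 - t.2) * t.1.2) := by fun_prop
  have ae0 : ∀ᵐ t ∂(μ.prod ν), ‖t.1‖ ≤ 1 ∧ ‖t.2‖ ≤ 1 := by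
    filter_upwards [Measure.quasiMeasurePreserving_fst.ae (aux_ae_ball hμ0),
      Measure.quasiMeasurePreserving_snd.ae (aux_ae_ball hν0)] with t h1 h2
    exact ⟨h1, h2⟩
  have ae1 : ∀ᵐ t ∂((μ.prod ν).prod (betaMeasure p q)),
      ‖(t.2 : ℂ) * t.1.1 + (1 - t.2) * t.1.2‖ ≤ 1 := by
    filter_upwards [Measure.quasiMeasurePreserving_fst.ae ae0,
      Measure.quasiMeasurePreserving_snd.ae (aux_beta_ae p q)] with t h1 h2
    refine (norm_add_le _ _).trans ?_
    have e : (1 - (t.2:ℂ)) = ((1 - t.2 : ℝ) : ℂ) := by push_cast; ring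
    rw [norm_mul, norm_mul, e, Complex.norm_real, Complex.norm_real, Real.norm_of_nonneg h2.1.le,
      Real.norm_of_nonneg (by linarith)]
    nlinarith
  refine ⟨((μ.prod ν).prod (betaMeasure p q)).map
    (fun t : (ℂ × ℂ) × ℝ => (t.2 : ℂ) * t.1.1 + (1 - t.2) * t.1.2),
    Measure.isProbabilityMeasure_map hm.aemeasurable, ?_, ?_⟩
  · rw [Measure.map_apply hm (isClosed_closedBall.measurableSet.compl)]
    rw [ae_iff] at ae1
    convert ae1 using 2
    ext t
    simp
  · intro z hz
    have hz' : ‖z‖ < 1 := by simpa using hz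
    rw [integral_map hm.aemeasurable (aux_ker_meas z _).aestronglyMeasurable, integral_prod]
    · simp only []
      rw [hg z hz, hh z hz, ← integral_prod_mul]
      apply integral_congr_ae
      filter_upwards [ae0] with t ht
      have h1 : 0 < (1 - t.1 * z).re := lt_of_lt_of_le (by linarith) (aux_re_lb ht.1)
      have h2 : 0 < (1 - t.2 * z).re := lt_of_lt_of_le (by linarith) (aux_re_lb ht.2)
      rw [← aux_feynman hp hq h1 h2]
      congr 1
      ext s
      congr 1
      ring
    · refine Integrable.of_bound (C := (1 - ‖z‖) ^ (-(p + q))) ?_ ?_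
      · exact ((aux_ker_meas z _).comp hm).aestronglyMeasurable
      · filter_upwards [ae1] with t ht
        exact aux_ker_bound ht hz' (by positivity)

lemma IsD.pow {p : ℝ} (hp : 0 < p) {g : ℂ → ℂ} (hg : IsD p g) (n : ℕ) :
    IsD ((n + 1 : ℕ) * p) (fun z => g z ^ (n + 1)) := by
  induction n with
  | zero => simpa using hg
  | succ n ih =>
    have := IsD.mul (by positivity) hp ih hg
    convert this using 1
    · push_cast; ring
    · ext z; rw [pow_succ]

lemma aux_slit {w z : ℂ} (hw : ‖w‖ ≤ 1) (hz : ‖z‖ < 1) : 1 - w * z ∈ slitPlane :=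
  Or.inl (lt_of_lt_of_le (by linarith) (aux_re_lb hw))

lemma IsD.closure {r : ℝ} {g : ℂ → ℂ} {G : ℕ → ℂ → ℂ} (hG : ∀ n, IsD r (G n))
    (h : ∀ z ∈ ball (0:ℂ) 1, Tendsto (fun n => G n z) atTop (𝓝 (g z))) : IsD r g := by
  choose μ h1 h2 h3 using hG
  refine aux_closure (isCompact_closedBall (0:ℂ) 1) (ball 0 1) (fun z w => (1 - w * z) ^ (-(r:ℂ)))
    ?_ μ h1 h2 g ?_
  · intro z hz
    apply ContinuousOn.cpow_const (by fun_prop)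
    intro w hw
    exact aux_slit (by simpa using hw) (by simpa using hz)
  · intro z hz
    exact (h z hz).congr (fun n => h3 n z hz)

lemma aux_exp_bound (x : ℂ) : ‖Complex.exp x - 1‖ ≤ ‖x‖ * Real.exp ‖x‖ := by
  have h := Complex.norm_exp_sub_sum_le_norm_mul_exp x 1
  simpa using h

lemma IsD.exp {β : ℝ} (hβ : 0 < β) (μ : Measure ℂ) [IsProbabilityMeasure μ]
    (hμ : μ (closedBall 0 1)ᶜ = 0) :
    IsD β (fun z => Complex.exp (∫ w, -β * Complex.log (1 - w * z) ∂μ)) := by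
  have hae := aux_ae_ball hμ
  refine IsD.closure (G := fun n z =>
    (∫ w, (1 - w * z) ^ (-((β / (n + 1 : ℕ) : ℝ):ℂ)) ∂μ) ^ (n + 1)) ?_ ?_
  · intro n
    have := IsD.pow (p := β / (n + 1 : ℕ)) (by positivity)
      (g := fun z => ∫ w, (1 - w * z) ^ (-((β / (n + 1 : ℕ) : ℝ):ℂ)) ∂μ)
      ⟨μ, inferInstance, hμ, fun z _ => rfl⟩ n
    convert this using 1
    field_simp
  · intro z hz
    have hz' : ‖z‖ < 1 := by simpa using hz
    obtain ⟨C, hC⟩ := (isCompact_closedBall (0:ℂ) 1).exists_bound_of_continuousOn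
      (f := fun w => Complex.log (1 - w * z)) (by
        apply ContinuousOn.clog (by fun_prop)
        intro w hw
        exact aux_slit (by simpa using hw) hz')
    have hC0 : 0 ≤ C := (norm_nonneg _).trans (hC 0 (by simp))
    have key : Tendsto (fun n : ℕ => (1 + (∫ w, (1 - w * z) ^ (-((β / n : ℝ):ℂ)) ∂μ - 1)) ^ n) atTop
        (𝓝 (Complex.exp (∫ w, -β * Complex.log (1 - w * z) ∂μ))) := by
      apply Complex.tendsto_one_add_pow_exp_of_tendsto
      have hlim : Tendsto (fun n : ℕ => ∫ w, (n:ℂ) * ((1 - w * z) ^ (-((β / n : ℝ):ℂ)) - 1) ∂μ) atTop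
        (𝓝 (∫ w, -β * Complex.log (1 - w * z) ∂μ)) := by
        apply tendsto_integral_of_dominated_convergence (fun _ => β * C * Real.exp (β * C))
        · intro n
          exact (((aux_ker_meas z _).sub_const 1).const_mul _).aestronglyMeasurable
        · exact integrable_const _
        · intro n
          filter_upwards [hae] with w hw
          rcases Nat.eq_zero_or_pos n with rfl | hn
          · simp; positivity
          have hn' : (1:ℝ) ≤ n := by exact_mod_cast hn
          rw [Complex.cpow_def_of_ne_zero (slitPlane_ne_zero (aux_slit hw hz')), norm_mul, Complex.norm_natCast]
          have hl : ‖Complex.log (1 - w * z)‖ ≤ C := hC w (by simpa using hw)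
          have hx : ‖Complex.log (1 - w * z) * (-((β / n : ℝ):ℂ))‖ ≤ β * C / n := by
            rw [norm_mul, norm_neg, Complex.norm_real, Real.norm_of_nonneg (by positivity)]
            calc _ ≤ C * (β / n) := by gcongr
              _ = _ := by ring
          have hx2 : β * C / n ≤ β * C := div_le_self (by positivity) hn'
          calc (n:ℝ) * ‖Complex.exp (Complex.log (1 - w * z) * (-((β / n : ℝ):ℂ))) - 1‖
              ≤ n * (β * C / n * Real.exp (β * C)) := by
                gcongr
                refine (aux_exp_bound _).trans ?_
                gcongr
                exact hx.trans hx2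
            _ = _ := by field_simp
        · filter_upwards [hae] with w hw
          set l := Complex.log (1 - w * z) with hl
          have hd : HasDerivAt (fun t : ℂ => Complex.exp (t * (-β * l))) (-β * l) 0 := by
            have := ((hasDerivAt_id (0:ℂ)).mul_const (-β * l)).cexp
            simpa using this
          have hs := hd.tendsto_slope_zero
          have hinv : Tendsto (fun n : ℕ => ((n:ℂ))⁻¹) atTop (𝓝[≠] 0) := by
            rw [tendsto_nhdsWithin_iff]
            refine ⟨tendsto_inv_atTop_nhds_zero_nat, ?_⟩
            filter_upwards [eventually_gt_atTop 0] with n hn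
            simp; omega
          refine (hs.comp hinv).congr (fun n => ?_)
          simp only [Function.comp, inv_inv, zero_add, smul_eq_mul, zero_mul, Complex.exp_zero]
          rw [Complex.cpow_def_of_ne_zero (slitPlane_ne_zero (aux_slit hw hz')), ← hl]
          congr 3
          push_cast
          ring
      refine hlim.congr (fun n => ?_)
      rw [integral_const_mul, integral_sub, integral_const, probReal_univ, one_smul]
      · refine Integrable.of_bound (C := (1 - ‖z‖) ^ (-(β / n))) (aux_ker_meas z _).aestronglyMeasurable ?_
        filter_upwards [hae] with w hw
        exact aux_ker_bound hw hz' (by positivity)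
      · exact integrable_const _
    have := key.comp (tendsto_add_atTop_nat 1)
    refine this.congr (fun n => ?_)
    simp [Function.comp]
lemma aux_herglotz (P : ℂ → ℂ) (hP : DiffContOnCl ℂ P (ball 0 1)) (hP0 : P 0 = 1)
    (hpos : ∀ ζ ∈ sphere (0:ℂ) 1, 0 ≤ (P ζ).re) :
    ∃ μ : Measure ℂ, IsProbabilityMeasure μ ∧ μ (closedBall 0 1)ᶜ = 0 ∧
      ∀ z ∈ ball (0:ℂ) 1, ∫ w, 2 * (w * z) / (1 - w * z) ∂μ = P z - 1 := by
  have hsph : ∀ θ : ℝ, circleMap 0 1 θ ∈ sphere (0:ℂ) 1 := fun θ => circleMap_mem_sphere _ zero_le_one θ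
  have hPc : ContinuousOn P (sphere 0 1) := by
    refine hP.2.mono ?_
    rw [closure_ball _ one_ne_zero]
    exact sphere_subset_closedBall
  have hPc' : Continuous (fun θ : ℝ => P (circleMap 0 1 θ)) :=
    hPc.comp_continuous (continuous_circleMap 0 1) hsph
  set q : ℝ → ℝ := fun θ => (2 * π)⁻¹ * (P (circleMap 0 1 θ)).re with hq
  have hqc : Continuous q := continuous_const.mul (Complex.continuous_re.comp hPc')
  have hq0 : ∀ θ, 0 ≤ q θ := fun θ => mul_nonneg (by positivity) (hpos _ (hsph θ))
  set m := (volume : Measure ℝ).restrict (Ioc 0 (2 * π)) with hm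
  have hPint : CircleIntegrable P 0 1 := hPc.circleIntegrable zero_le_one
  have hPR : DiffContOnCl ℂ P (ball 0 |1|) := by simpa using hP
  have hprob : IsProbabilityMeasure (m.withDensity (fun θ => ENNReal.ofReal (q θ))) := by
    apply aux_dens_prob
    · exact hqc.integrableOn_Ioc
    · exact Eventually.of_forall hq0
    · have e := Complex.reCLM.circleAverage_comp_comm hPint
      rw [hPR.circleAverage, hP0] at e
      rw [circleAverage_def, intervalIntegral.integral_of_le (by positivity)] at e
      rw [hq, integral_const_mul]
      simpa using e
  have hmap : Measurable (fun θ : ℝ => (circleMap 0 1 θ)⁻¹) := by fun_prop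
  refine ⟨(m.withDensity (fun θ => ENNReal.ofReal (q θ))).map (fun θ => (circleMap 0 1 θ)⁻¹),
    Measure.isProbabilityMeasure_map hmap.aemeasurable, ?_, ?_⟩
  · rw [Measure.map_apply hmap (isClosed_closedBall.measurableSet.compl)]
    have : (fun θ : ℝ => (circleMap 0 1 θ)⁻¹) ⁻¹' (closedBall (0:ℂ) 1)ᶜ = ∅ := by
      ext θ
      simp
    rw [this, measure_empty]
  · intro z hz
    have hz' : ‖z‖ < 1 := by simpa using hz
    rw [integral_map hmap.aemeasurable (Measurable.aestronglyMeasurable (by fun_prop)),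
      aux_dens _ _ hqc.measurable (Eventually.of_forall hq0)]
    have e1 : ∫ θ, (q θ : ℂ) * (2 * ((circleMap 0 1 θ)⁻¹ * z) / (1 - (circleMap 0 1 θ)⁻¹ * z)) ∂m
        = circleAverage (fun ζ => ((P ζ).re : ℂ) * (2 * (ζ⁻¹ * z) / (1 - ζ⁻¹ * z))) 0 1 := by
      rw [circleAverage_def, intervalIntegral.integral_of_le (by positivity), hm, ← integral_smul]
      congr 1
      ext θ
      rw [hq, Complex.real_smul]
      push_cast
      ring
    rw [e1]
    set F : ℂ → ℂ := fun ζ => (starRingEnd ℂ z * ζ / (1 - starRingEnd ℂ z * ζ)) * P ζ with hF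
    have hden : ∀ ζ ∈ closedBall (0:ℂ) 1, 1 - starRingEnd ℂ z * ζ ≠ 0 := by
      intro ζ hζ
      have hζ' : ‖ζ‖ ≤ 1 := by simpa using hζ
      have := aux_slit (w := ζ) (z := starRingEnd ℂ z) hζ' (by simpa using hz')
      rw [mul_comm]
      exact slitPlane_ne_zero this
    have hFd : DiffContOnCl ℂ F (ball 0 |1|) := by
      rw [abs_one]
      have h1 : DiffContOnCl ℂ (fun ζ => starRingEnd ℂ z * ζ / (1 - starRingEnd ℂ z * ζ)) (ball 0 1) := by
        apply DifferentiableOn.diffContOnCl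
        rw [closure_ball _ one_ne_zero]
        exact DifferentiableOn.div (by fun_prop) (by fun_prop) hden
      exact h1.smul hP
    have hFc : ContinuousOn F (sphere 0 1) := by
      refine ContinuousOn.mul (ContinuousOn.div (by fun_prop) (by fun_prop) ?_) hPc
      exact fun ζ hζ => hden ζ (sphere_subset_closedBall hζ)
    have hne : ∀ ζ ∈ sphere (0:ℂ) 1, ζ - z ≠ 0 := by
      intro ζ hζ h
      rw [sub_eq_zero] at h
      rw [h] at hζ
      simp at hζ
      linarith
    have e2 : circleAverage (fun ζ => ((P ζ).re : ℂ) * (2 * (ζ⁻¹ * z) / (1 - ζ⁻¹ * z))) 0 1 =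
        circleAverage (((fun ζ => ((ζ - 0) / (ζ - z)) • P ζ) - P) + (fun ζ => Complex.conjCLE (F ζ))) 0 1 := by
      apply circleAverage_congr_sphere
      intro ζ hζ
      rw [abs_one] at hζ
      have hn : ‖ζ‖ = 1 := by simpa using hζ
      have hζ0 : ζ ≠ 0 := by intro h; simp [h] at hn
      have hcj : starRingEnd ℂ ζ = ζ⁻¹ := by
        rw [Complex.inv_def, Complex.normSq_eq_norm_sq, hn]; simp
      have hn1 := hne ζ hζ
      have hn2 : 1 - z * ζ⁻¹ ≠ 0 := by
        intro h
        apply hn1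
        field_simp at h
        simpa using h
      have hn3 : 1 - ζ⁻¹ * z ≠ 0 := by rwa [mul_comm]
      simp only [Pi.add_apply, Pi.sub_apply, hF, Complex.conjCLE_apply, map_mul, map_div₀, map_sub, map_one,
        Complex.conj_conj, hcj, sub_zero, smul_eq_mul]
      have hre : ((P ζ).re : ℂ) = (P ζ + starRingEnd ℂ (P ζ)) / 2 := by
        rw [Complex.add_conj]; push_cast; ring
      rw [hre]
      have r1 : 2 * (ζ⁻¹ * z) / (1 - ζ⁻¹ * z) = 2 * z / (ζ - z) := by
        rw [div_eq_div_iff hn3 hn1]; field_simp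
      have r2 : z * ζ⁻¹ / (1 - z * ζ⁻¹) = z / (ζ - z) := by
        rw [div_eq_div_iff hn2 hn1]; field_simp
      rw [r1, r2]
      field_simp
      ring
    have i1 : CircleIntegrable (fun ζ => ((ζ - 0) / (ζ - z)) • P ζ) 0 1 := by
      apply ContinuousOn.circleIntegrable zero_le_one
      exact ContinuousOn.smul (ContinuousOn.div (by fun_prop) (by fun_prop) hne) hPc
    have i2 : CircleIntegrable (fun ζ => Complex.conjCLE (F ζ)) 0 1 := by
      apply ContinuousOn.circleIntegrable zero_le_one
      exact Complex.conjCLE.continuous.comp_continuousOn hFc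
    rw [e2, circleAverage_add (i1.sub hPint) i2, circleAverage_sub i1 hPint,
      hPR.circleAverage_smul_div (by simpa using hz'), hPR.circleAverage, hP0]
    have e3 := (Complex.conjCLE : ℂ →L[ℝ] ℂ).circleAverage_comp_comm (hFc.circleIntegrable zero_le_one)
    rw [hFd.circleAverage] at e3
    have e4 : circleAverage (fun ζ => Complex.conjCLE (F ζ)) 0 1 = 0 := by
      refine Eq.trans ?_ (e3.trans ?_)
      · rfl
      · simp [hF]
    rw [e4, add_zero]
lemma aux_K_deriv (β : ℝ) (μ : Measure ℂ) [IsProbabilityMeasure μ]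
    (hμ : μ (closedBall 0 1)ᶜ = 0) {z : ℂ} (hz : z ∈ ball (0:ℂ) 1) :
    HasDerivAt (fun z => ∫ w, -β * Complex.log (1 - w * z) ∂μ) (∫ w, β * (w / (1 - w * z)) ∂μ) z := by
  have hae := aux_ae_ball hμ
  have hz' : ‖z‖ < 1 := by simpa using hz
  set δ := (1 - ‖z‖) / 2 with hδ
  have hδ0 : 0 < δ := by rw [hδ]; linarith
  have hnear : ∀ x ∈ ball z δ, ‖x‖ < 1 - δ := by
    intro x hx
    rw [mem_ball, dist_eq_norm] at hx
    have : ‖x‖ ≤ ‖x - z‖ + ‖z‖ := by simpa using norm_add_le (x - z) z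
    linarith
  refine (hasDerivAt_integral_of_dominated_loc_of_deriv_le (s := ball z δ)
    (F := fun (x w : ℂ) => -β * Complex.log (1 - w * x))
    (F' := fun (x w : ℂ) => β * (w / (1 - w * x)))
    (bound := fun _ => |β| * (1 / δ))
    (ball_mem_nhds z hδ0) ?_ ?_ ?_ ?_ ?_ ?_).2
  · filter_upwards with x
    exact Measurable.aestronglyMeasurable (by fun_prop)
  · obtain ⟨C, hC⟩ := (isCompact_closedBall (0:ℂ) 1).exists_bound_of_continuousOn
      (f := fun w => -β * Complex.log (1 - w * z)) (by
        apply ContinuousOn.mul (by fun_prop)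
        apply ContinuousOn.clog (by fun_prop)
        intro w hw
        exact aux_slit (by simpa using hw) hz')
    refine Integrable.of_bound (C := C) (Measurable.aestronglyMeasurable (by fun_prop)) ?_
    filter_upwards [hae] with w hw
    exact hC w (by simpa using hw)
  · exact Measurable.aestronglyMeasurable (by fun_prop)
  · filter_upwards [hae] with w hw x hx
    rw [norm_mul, norm_div, Complex.norm_real, Real.norm_eq_abs]
    have h1 : δ ≤ ‖1 - w * x‖ := by
      have := (aux_re_lb (z := x) hw).trans (Complex.re_le_norm _)
      linarith [hnear x hx]
    gcongr
  · exact integrable_const _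
  · filter_upwards [hae] with w hw x hx
    have hs := aux_slit hw (z := x) (by linarith [hnear x hx])
    have h1 : HasDerivAt (fun x : ℂ => 1 - w * x) (-w) x := by
      simpa using ((hasDerivAt_id x).const_mul w).const_sub 1
    have h2 := (h1.clog hs).const_mul (-β : ℂ)
    convert! h2 using 1
    ring

lemma aux_isD_dil {β : ℝ} (hβ : 0 < β) {g : ℂ → ℂ} (hg : AnalyticOnNhd ℂ g (ball 0 1)) (hg1 : g 0 = 1)
    (hg0 : ∀ z ∈ ball (0:ℂ) 1, g z ≠ 0)
    (hre : ∀ z ∈ ball (0:ℂ) 1, -(β / 2) < (z * deriv g z / g z).re) {ρ : ℝ} (hρ0 : 0 < ρ) (hρ1 : ρ < 1) :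
    IsD β (fun z => g (ρ * z)) := by
  have hmem : ∀ z ∈ closedBall (0:ℂ) 1, (ρ:ℂ) * z ∈ ball (0:ℂ) 1 := by
    intro z hz
    have hz' : ‖z‖ ≤ 1 := by simpa using hz
    rw [mem_ball_zero_iff, norm_mul, Complex.norm_real, Real.norm_of_nonneg hρ0.le]
    nlinarith [norm_nonneg z]
  set P : ℂ → ℂ := fun z => 1 + (2 / β) * ((ρ * z) * deriv g (ρ * z) / g (ρ * z)) with hP
  have hPd : DiffContOnCl ℂ P (ball 0 1) := by
    apply DifferentiableOn.diffContOnCl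
    rw [closure_ball _ one_ne_zero]
    intro z hz
    apply DifferentiableAt.differentiableWithinAt
    have h1 : DifferentiableAt ℂ (fun z : ℂ => (ρ:ℂ) * z) z := by fun_prop
    have h2 : DifferentiableAt ℂ (fun z : ℂ => g (ρ * z)) z :=
      (hg _ (hmem z hz)).differentiableAt.comp z h1
    have h3 : DifferentiableAt ℂ (fun z : ℂ => deriv g (ρ * z)) z :=
      (hg.deriv _ (hmem z hz)).differentiableAt.comp z h1
    exact (((h1.mul h3).div h2 (hg0 _ (hmem z hz))).const_mul _).const_add _
  obtain ⟨μ, hμ, hμ0, hintg⟩ := aux_herglotz P hPd (by simp [hP]) (by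
    intro z hz
    have h := hre _ (hmem z (sphere_subset_closedBall hz))
    have e : ((2:ℂ) / β) = ((2 / β : ℝ) : ℂ) := by push_cast; ring
    simp only [hP]
    rw [Complex.add_re, Complex.one_re, e, Complex.re_ofReal_mul]
    have : 2 / β * (-(β / 2)) ≤ 2 / β * ((ρ * z) * deriv g (ρ * z) / g (ρ * z)).re := by gcongr
    have e2 : 2 / β * (-(β / 2)) = -1 := by field_simp
    linarith)
  set K : ℂ → ℂ := fun z => ∫ w, -β * Complex.log (1 - w * z) ∂μ with hK
  have hKd : ∀ z ∈ ball (0:ℂ) 1, HasDerivAt K (∫ w, β * (w / (1 - w * z)) ∂μ) z :=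
    fun z hz => aux_K_deriv β μ hμ0 hz
  have hzK : ∀ z ∈ ball (0:ℂ) 1, z * (∫ w, β * (w / (1 - w * z)) ∂μ) = (ρ * z) * deriv g (ρ * z) / g (ρ * z) := by
    intro z hz
    have h := hintg z hz
    have hβ' : (β:ℂ) ≠ 0 := by exact_mod_cast hβ.ne'
    have e : z * (∫ w, β * (w / (1 - w * z)) ∂μ) = β / 2 * ∫ w, 2 * (w * z) / (1 - w * z) ∂μ := by
      rw [← integral_const_mul, ← integral_const_mul]
      congr 1
      ext w
      ring
    rw [e, h, hP]
    simp only
    field_simp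
    ring
  set H : ℂ → ℂ := fun z => g (ρ * z) * Complex.exp (- K z) with hH
  have hgd : ∀ z ∈ ball (0:ℂ) 1, HasDerivAt (fun z : ℂ => g (ρ * z)) (deriv g (ρ * z) * ρ) z := by
    intro z hz
    have h1 : HasDerivAt (fun z : ℂ => (ρ:ℂ) * z) ρ z := by simpa using (hasDerivAt_id z).const_mul (ρ:ℂ)
    exact (hg _ (hmem z (ball_subset_closedBall hz))).differentiableAt.hasDerivAt.comp z h1
  have hHd : ∀ z ∈ ball (0:ℂ) 1, HasDerivAt H (deriv g (ρ * z) * ρ * Complex.exp (- K z) +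
      g (ρ * z) * (Complex.exp (- K z) * (- ∫ w, β * (w / (1 - w * z)) ∂μ))) z :=
    fun z hz => (hgd z hz).mul (hKd z hz).neg.cexp
  have hHdiff : DifferentiableOn ℂ H (ball 0 1) :=
    fun z hz => (hHd z hz).differentiableAt.differentiableWithinAt
  have hHz : ∀ z ∈ ball (0:ℂ) 1, z ≠ 0 → deriv H z = 0 := by
    intro z hz hz0
    rw [(hHd z hz).deriv]
    have h1 := hzK z hz
    have h2 := hg0 _ (hmem z (ball_subset_closedBall hz))
    rw [eq_div_iff h2] at h1
    have h3 : (∫ w, β * (w / (1 - w * z)) ∂μ) * g (ρ * z) = ρ * deriv g (ρ * z) := by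
      apply mul_left_cancel₀ hz0
      linear_combination h1
    linear_combination (-Complex.exp (-K z)) * h3
  have h0mem : (0:ℂ) ∈ ball (0:ℂ) 1 := by simp
  have hH0 : deriv H 0 = 0 := by
    have hc : ContinuousAt (deriv H) 0 :=
      ((hHdiff.analyticOnNhd isOpen_ball).deriv 0 h0mem).continuousAt
    have t1 : Tendsto (deriv H) (𝓝[≠] 0) (𝓝 (deriv H 0)) := hc.tendsto.mono_left nhdsWithin_le_nhds
    have t2 : Tendsto (deriv H) (𝓝[≠] 0) (𝓝 0) := by
      refine tendsto_const_nhds.congr' ?_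
      filter_upwards [self_mem_nhdsWithin, mem_nhdsWithin_of_mem_nhds (isOpen_ball.mem_nhds h0mem)] with z h1 h2
      exact (hHz z h2 h1).symm
    exact tendsto_nhds_unique t1 t2
  have hconst : ∀ z ∈ ball (0:ℂ) 1, H z = 1 := by
    intro z hz
    have h := isOpen_ball.is_const_of_deriv_eq_zero (convex_ball (0:ℂ) 1).isPreconnected hHdiff
      (fun x hx => by
        by_cases hx0 : x = 0
        · rw [hx0]; exact hH0
        · exact hHz x hx hx0) hz h0mem
    rw [h]
    simp [hH, hK, hg1]
  obtain ⟨σ, s1, s2, s3⟩ := IsD.exp hβ μ hμ0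
  refine ⟨σ, s1, s2, fun z hz => ?_⟩
  rw [← s3 z hz]
  have := hconst z hz
  simp only [hH, Complex.exp_neg] at this
  rw [mul_inv_eq_one₀ (Complex.exp_ne_zero _)] at this
  exact this

lemma aux_sweep {β : ℝ} {h : ℂ → ℂ} (hh : IsD β h) {ρ : ℝ} (hρ0 : 0 < ρ) (hρ1 : ρ < 1) :
    ∃ ν : Measure ℝ, IsProbabilityMeasure ν ∧ ν (Icc 0 (2 * π))ᶜ = 0 ∧
      ∀ z ∈ ball (0:ℂ) 1, h (ρ * z) = ∫ θ : ℝ, (1 - Complex.exp (θ * I) * z) ^ (-(β:ℂ)) ∂ν := by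
  obtain ⟨μ, hμ, hμ0, hintg⟩ := hh
  have hae := aux_ae_ball hμ0
  set m := (volume : Measure ℝ).restrict (Ioc 0 (2 * π)) with hm
  set q : ℂ × ℝ → ℝ := fun t => (2 * π)⁻¹ * poissonKernel 0 ((ρ:ℂ) * t.1) (circleMap 0 1 t.2) with hq
  have hqe : q = fun t => (2 * π)⁻¹ * ((‖circleMap 0 1 t.2‖ ^ 2 - ‖(ρ:ℂ) * t.1‖ ^ 2) / ‖circleMap 0 1 t.2 - (ρ:ℂ) * t.1‖ ^ 2) := by
    ext t
    simp [hq, poissonKernel_def]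
  have hqm : Measurable q := by
    rw [hqe]
    fun_prop
  have hmem : ∀ w : ℂ, ‖w‖ ≤ 1 → ‖(ρ:ℂ) * w‖ ≤ ρ := by
    intro w hw
    rw [norm_mul, Complex.norm_real, Real.norm_of_nonneg hρ0.le]
    nlinarith
  have hb : ∀ t : ℂ × ℝ, ‖t.1‖ ≤ 1 → 0 ≤ q t ∧ q t ≤ (2 * π)⁻¹ * (1 / (1 - ρ) ^ 2) := by
    intro t ht
    have h1 := hmem t.1 ht
    have h2 : 1 - ρ ≤ ‖circleMap 0 1 t.2 - (ρ:ℂ) * t.1‖ := by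
      have := norm_sub_norm_le (circleMap 0 1 t.2) ((ρ:ℂ) * t.1)
      simp only [norm_circleMap_zero, abs_one] at this
      linarith
    have h3 : 0 < 1 - ρ := by linarith
    rw [hqe]
    simp only [norm_circleMap_zero, abs_one, one_pow]
    have h4 : 0 ≤ 1 - ‖(ρ:ℂ) * t.1‖ ^ 2 := by nlinarith [norm_nonneg ((ρ:ℂ) * t.1)]
    constructor
    · positivity
    · gcongr
      nlinarith [sq_nonneg ‖(ρ:ℂ) * t.1‖]
  have haeM : ∀ᵐ t ∂(μ.prod m), ‖t.1‖ ≤ 1 := Measure.quasiMeasurePreserving_fst.ae hae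
  have hkey : ∀ Φ : ℂ → ℂ, DiffContOnCl ℂ Φ (ball 0 1) →
      Integrable (fun t : ℂ × ℝ => (q t : ℂ) * Φ (circleMap 0 1 t.2)) (μ.prod m) ∧
      ∫ t, (q t : ℂ) * Φ (circleMap 0 1 t.2) ∂(μ.prod m) = ∫ w, Φ (ρ * w) ∂μ := by
    intro Φ hΦ
    have hΦs : ContinuousOn Φ (sphere 0 1) := by
      refine hΦ.2.mono ?_
      rw [closure_ball _ one_ne_zero]
      exact sphere_subset_closedBall
    have hsph : ∀ θ : ℝ, circleMap 0 1 θ ∈ sphere (0:ℂ) 1 := fun θ => circleMap_mem_sphere _ zero_le_one θ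
    have hΦc : Continuous (fun θ : ℝ => Φ (circleMap 0 1 θ)) :=
      hΦs.comp_continuous (continuous_circleMap 0 1) hsph
    obtain ⟨C, hC⟩ := (isCompact_sphere (0:ℂ) 1).exists_bound_of_continuousOn hΦs
    have hI : Integrable (fun t : ℂ × ℝ => (q t : ℂ) * Φ (circleMap 0 1 t.2)) (μ.prod m) := by
      refine Integrable.of_bound (C := (2 * π)⁻¹ * (1 / (1 - ρ) ^ 2) * C) ?_ ?_
      · exact ((Complex.measurable_ofReal.comp hqm).mul
          (hΦc.measurable.comp measurable_snd)).aestronglyMeasurable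
      · filter_upwards [haeM] with t ht
        rw [norm_mul, Complex.norm_real, Real.norm_of_nonneg (hb t ht).1]
        exact mul_le_mul (hb t ht).2 (hC _ (hsph _)) (norm_nonneg _) (by positivity)
    refine ⟨hI, ?_⟩
    rw [integral_prod _ hI]
    apply integral_congr_ae
    filter_upwards [hae] with w hw
    have h1 := hΦ.circleAverage_poissonKernel_smul (w := (ρ:ℂ) * w) (by
      rw [mem_ball_zero_iff]; linarith [hmem w hw])
    rw [← h1, circleAverage_def, intervalIntegral.integral_of_le (by positivity), ← integral_smul]
    congr 1
    ext θ
    simp only [hq, Pi.smul_apply', Complex.real_smul]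
    push_cast
    ring
  have hq0 : ∀ᵐ t ∂(μ.prod m), 0 ≤ q t := by
    filter_upwards [haeM] with t ht
    exact (hb t ht).1
  have hprob : IsProbabilityMeasure ((μ.prod m).withDensity (fun t => ENNReal.ofReal (q t))) := by
    obtain ⟨i1, i2⟩ := hkey (fun _ => 1) diffContOnCl_const
    simp only [mul_one] at i1 i2
    apply aux_dens_prob
    · exact i1.re
    · exact hq0
    · rw [integral_const, probReal_univ, one_smul, integral_complex_ofReal] at i2
      exact_mod_cast i2
  refine ⟨((μ.prod m).withDensity (fun t => ENNReal.ofReal (q t))).map Prod.snd,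
    Measure.isProbabilityMeasure_map measurable_snd.aemeasurable, ?_, ?_⟩
  · rw [Measure.map_apply measurable_snd measurableSet_Icc.compl]
    apply withDensity_absolutelyContinuous
    have : ∀ᵐ θ ∂m, θ ∈ Icc 0 (2 * π) := by
      filter_upwards [ae_restrict_mem measurableSet_Ioc] with θ hθ
      exact Ioc_subset_Icc_self hθ
    have h2 : ∀ᵐ t ∂(μ.prod m), t.2 ∈ Icc 0 (2 * π) := Measure.quasiMeasurePreserving_snd.ae this
    rw [ae_iff] at h2
    exact h2
  · intro z hz
    have hz' : ‖z‖ < 1 := by simpa using hz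
    have hρz : (ρ:ℂ) * z ∈ ball (0:ℂ) 1 := by
      rw [mem_ball_zero_iff]
      linarith [hmem z hz'.le]
    rw [integral_map measurable_snd.aemeasurable (Measurable.aestronglyMeasurable (by fun_prop)),
      aux_dens _ _ hqm hq0, hintg _ hρz]
    have hd : DiffContOnCl ℂ (fun x : ℂ => (1 - x * z) ^ (-(β:ℂ))) (ball 0 1) := by
      apply DifferentiableOn.diffContOnCl
      rw [closure_ball _ one_ne_zero]
      apply DifferentiableOn.cpow_const (by fun_prop)
      intro x hx
      exact aux_slit (by simpa using hx) hz'
    have := (hkey _ hd).2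
    simp only [circleMap, Complex.ofReal_one, one_mul, zero_add] at this
    rw [this]
    congr 1
    ext w
    congr 1
    ring
theorem stmt_1 (α : ℝ) (hα₁ : -(1/2 : ℝ) ≤ α) (hα₂ : α < 1)
    (f : ℂ → ℂ) (hf : f ∈ zalcF α) :
    ∃ ν : Measure ℝ, IsProbabilityMeasure ν ∧ ν (Set.Icc 0 (2*π))ᶜ = 0 ∧
      ∀ z ∈ ball (0:ℂ) 1,
        deriv f z = ∫ θ : ℝ, (1 - Complex.exp (θ * Complex.I) * z) ^ ((2*α - 2 : ℂ)) ∂ν := by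
  obtain ⟨hfa, -, hf1, hf0, hre⟩ := hf
  set β : ℝ := 2 - 2 * α with hβ
  have hβ0 : 0 < β := by rw [hβ]; linarith
  have hexp : (2*α - 2 : ℂ) = -(β:ℂ) := by rw [hβ]; push_cast; ring
  rw [hexp]
  have hga : AnalyticOnNhd ℂ (deriv f) (ball 0 1) :=
    ((isOpen_ball.analyticOn_iff_analyticOnNhd).mp hfa).deriv
  have hre' : ∀ z ∈ ball (0:ℂ) 1, -(β / 2) < (z * deriv (deriv f) z / deriv f z).re := by
    intro z hz
    have := hre z hz
    rw [Complex.add_re, Complex.one_re] at this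
    rw [hβ]
    linarith
  set ρ : ℕ → ℝ := fun n => 1 - 1 / ((n:ℝ) + 2) with hρ
  have hρ0 : ∀ n, 0 < ρ n := by
    intro n
    have : 1 / ((n:ℝ) + 2) < 1 := by rw [div_lt_one (by positivity)]; linarith [Nat.cast_nonneg (α := ℝ) n]
    simp only [hρ]; linarith
  have hρ1 : ∀ n, ρ n < 1 := by
    intro n
    have : 0 < 1 / ((n:ℝ) + 2) := by positivity
    simp only [hρ]; linarith
  have hρt : Tendsto ρ atTop (𝓝 1) := by
    have h1 : Tendsto (fun n : ℕ => 1 / ((n:ℝ) + 2)) atTop (𝓝 0) :=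
      tendsto_const_nhds.div_atTop (tendsto_atTop_add_const_right _ _ tendsto_natCast_atTop_atTop)
    have h2 := h1.const_sub 1
    rw [sub_zero] at h2
    exact h2
  have hstep : ∀ n, ∃ ν : Measure ℝ, IsProbabilityMeasure ν ∧ ν (Icc 0 (2 * π))ᶜ = 0 ∧
      ∀ z ∈ ball (0:ℂ) 1, deriv f (ρ n * (ρ n * z)) = ∫ θ : ℝ, (1 - Complex.exp (θ * I) * z) ^ (-(β:ℂ)) ∂ν :=
    fun n => aux_sweep (aux_isD_dil hβ0 hga hf1 hf0 hre' (hρ0 n) (hρ1 n)) (hρ0 n) (hρ1 n)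
  choose ν h1 h2 h3 using hstep
  refine aux_closure isCompact_Icc (ball 0 1)
    (fun (z : ℂ) (θ : ℝ) => (1 - Complex.exp (θ * Complex.I) * z) ^ (-(β:ℂ))) ?_ ν h1 h2 (deriv f) ?_
  · intro z hz
    apply ContinuousOn.cpow_const (by fun_prop)
    intro θ _
    exact aux_slit (by rw [Complex.norm_exp_ofReal_mul_I]) (by simpa using hz)
  · intro z hz
    have hc := (hga z hz).continuousAt
    have ht : Tendsto (fun n => (ρ n : ℂ) * (ρ n * z)) atTop (𝓝 z) := by
      have h4 : Tendsto (fun n => (ρ n : ℂ)) atTop (𝓝 1) := by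
        have h5 := (Complex.continuous_ofReal.tendsto 1).comp hρt
        rw [Complex.ofReal_one] at h5
        exact h5
      simpa using h4.mul (h4.mul_const z)
    exact (hc.tendsto.comp ht).congr (fun n => h3 n z hz)
end

section
/- Let -1/2 ≤ α < 1, λ > 0, and let f ∈ F(α) with Taylor expansion f(z) = z + Σ_{n=2}^∞ a_n z^n. Suppose ν is a probability measure on [0, 2π] such that f'(z) = ∫₀^{2π} (1 - e^{iθ} z)^{2α-2} dν(θ) for all z ∈ 𝔻 (principal branch of the power). Then for every integer n ≥ 2: Re(λ a_n² - a_{2n-1}) ≤ (λ A_n(α)² - 2 A_{2n-1}(α)) ∫₀^{2π} cos²((n-1)θ) dν(θ) + A_{2n-1}(α). -/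
open Complex MeasureTheory Metric Set Real

/-- Taylor coefficients of `f` at `0`. -/
noncomputable def zalcCoeff (f : ℂ → ℂ) (n : ℕ) : ℂ :=
  iteratedDeriv n f 0 / (Nat.factorial n : ℂ)

/-- `A_n(α) = Γ(n+1-2α)/(n! Γ(2-2α))`. -/
noncomputable def zalcA (α : ℝ) (n : ℕ) : ℝ :=
  Real.Gamma ((n : ℝ) + 1 - 2*α) / ((Nat.factorial n : ℝ) * Real.Gamma (2 - 2*α))

lemma zalc_choose (α : ℝ) (hα : α < 1) (k : ℕ) :
    Ring.choose (((2 - 2 * α : ℝ) : ℂ) + k - 1) k = ((k + 1 : ℕ) : ℂ) * (zalcA α (k + 1) : ℂ) := by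
  have h0 : (0:ℝ) < 2 - 2 * α := by linarith
  have hG : ∀ k : ℕ, Real.Gamma ((2 - 2 * α) + k) =
      (ascPochhammer ℝ k).eval (2 - 2 * α) * Real.Gamma (2 - 2 * α) := by
    intro k
    induction k with
    | zero => simp
    | succ k ih =>
      rw [ascPochhammer_succ_eval, Nat.cast_succ, ← add_assoc, Real.Gamma_add_one (by positivity), ih]
      ring
  have h1 : Ring.choose (((2 - 2 * α : ℝ) : ℂ) + k - 1) k =
      ((Ring.multichoose (2 - 2 * α : ℝ) k : ℝ) : ℂ) := by
    rw [Ring.choose]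
    rw [show ((2 - 2 * α : ℝ) : ℂ) + k - 1 - k + 1 = ((2 - 2 * α : ℝ) : ℂ) by ring]
    exact (Ring.map_multichoose (algebraMap ℝ ℂ) _ _).symm
  have h2 := Ring.factorial_nsmul_multichoose_eq_ascPochhammer (2 - 2 * α : ℝ) k
  rw [Polynomial.ascPochhammer_smeval_eq_eval, nsmul_eq_mul] at h2
  rw [h1, zalcA, show ((k + 1 : ℕ) : ℝ) + 1 - 2 * α = (2 - 2 * α) + k by push_cast; ring, hG, ← h2]
  have h3 := (Real.Gamma_pos_of_pos h0).ne'
  norm_cast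
  rw [Nat.factorial_succ]
  have : (k.factorial : ℝ) ≠ 0 := by positivity
  push_cast
  generalize Real.Gamma (2 - 2 * α) = G at h3 ⊢
  generalize Ring.multichoose (2 - 2 * α) k = c
  field_simp

lemma zalc_coeff (α : ℝ) (hα : α < 1) (f : ℂ → ℂ) (hf : AnalyticOn ℂ f (ball 0 1))
    (ν : Measure ℝ) (hν : IsProbabilityMeasure ν)
    (hrep : ∀ z ∈ ball (0:ℂ) 1,
        deriv f z = ∫ θ : ℝ, (1 - Complex.exp (θ * Complex.I) * z) ^ ((2*α - 2 : ℂ)) ∂ν)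
    (k : ℕ) : zalcCoeff f (k + 1) = zalcA α (k + 1) * ∫ θ : ℝ, Complex.exp (θ * Complex.I) ^ k ∂ν := by
  have hB := Complex.one_div_one_sub_cpow_hasFPowerSeriesOnBall_zero ((2 - 2 * α : ℝ) : ℂ)
  set c : ℕ → ℂ := fun k => Ring.choose (((2 - 2 * α : ℝ) : ℂ) + k - 1) k with hc
  have hS : ∀ w : ℂ, ‖w‖ < 1 → HasSum (fun n => c n * w ^ n) ((1 - w) ^ (2 * α - 2 : ℂ)) := by
    intro w hw
    have := hB.hasSum (y := w) (by
      rw [mem_eball_zero_iff, ← ofReal_norm_eq_enorm, ← ENNReal.ofReal_one]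
      exact (ENNReal.ofReal_lt_ofReal_iff one_pos).2 hw)
    simp only [FormalMultilinearSeries.ofScalars_apply_eq, smul_eq_mul, zero_add] at this
    rw [one_div, ← Complex.cpow_neg,
      show -((2 - 2 * α : ℝ) : ℂ) = 2 * α - 2 by push_cast; ring] at this
    exact this
  have hA : AnalyticAt ℂ (deriv f) 0 :=
    ((isOpen_ball.analyticOn_iff_analyticOnNhd.1 hf) 0 (by simp)).deriv
  have hP : HasFPowerSeriesAt (deriv f) (FormalMultilinearSeries.ofScalars ℂ
      (fun k => c k * ∫ θ : ℝ, Complex.exp (θ * Complex.I) ^ k ∂ν)) 0 := by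
    rw [hasFPowerSeriesAt_iff]
    filter_upwards [ball_mem_nhds (0:ℂ) one_pos] with z hz
    have hz' : ‖z‖ < 1 := by simpa using hz
    rw [zero_add, hrep z hz]
    have := hasSum_integral_of_dominated_convergence (μ := ν)
      (F := fun n (θ : ℝ) => c n * (Complex.exp (θ * Complex.I) * z) ^ n)
      (f := fun θ : ℝ => (1 - Complex.exp (θ * Complex.I) * z) ^ ((2*α - 2 : ℂ)))
      (fun n _ => ‖c n * z ^ n‖) ?_ ?_ ?_ ?_ ?_
    · convert this using 2 with n
      rw [FormalMultilinearSeries.coeff_ofScalars]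
      simp_rw [mul_pow]
      rw [integral_const_mul, integral_mul_const, smul_eq_mul]
      ring
    · intro n
      exact Continuous.aestronglyMeasurable (by fun_prop)
    · intro n
      refine Filter.Eventually.of_forall fun θ => ?_
      simp [Complex.norm_exp_ofReal_mul_I]
    · refine Filter.Eventually.of_forall fun θ => ?_
      exact (hS z hz').summable.norm
    · exact integrable_const _
    · refine Filter.Eventually.of_forall fun θ => ?_
      apply hS
      simpa [Complex.norm_exp_ofReal_mul_I] using hz'
  have hE := hA.hasFPowerSeriesAt.eq_formalMultilinearSeries hP
  have hE' := congrFun (FormalMultilinearSeries.ofScalars_series_injective ℂ ℂ hE) k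
  simp only [hc, zalc_choose α hα] at hE'
  rw [zalcCoeff, iteratedDeriv_succ', Nat.factorial_succ]
  have h1 : (k.factorial : ℂ) ≠ 0 := by exact_mod_cast k.factorial_ne_zero
  have h2 : ((k + 1 : ℕ) : ℂ) ≠ 0 := by exact_mod_cast k.succ_ne_zero
  rw [div_eq_iff h1] at hE'
  rw [hE']
  generalize (∫ θ : ℝ, Complex.exp (θ * Complex.I) ^ k ∂ν) = J
  rw [Nat.cast_mul]
  field_simp

lemma zalc_A_nonneg (α : ℝ) (hα : α < 1) (n : ℕ) (hn : 1 ≤ n) : 0 ≤ zalcA α n := by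
  have : (1:ℝ) ≤ n := by exact_mod_cast hn
  rw [zalcA]
  have h1 := Real.Gamma_pos_of_pos (show 0 < (n:ℝ) + 1 - 2 * α by linarith)
  have h2 := Real.Gamma_pos_of_pos (show 0 < 2 - 2 * α by linarith)
  positivity

lemma zalc_int (ν : Measure ℝ) (hν : IsProbabilityMeasure ν) (k : ℕ) :
    Integrable (fun θ : ℝ => Complex.exp (θ * Complex.I) ^ k) ν := by
  refine Integrable.of_bound (C := 1) (Continuous.aestronglyMeasurable (by fun_prop)) ?_
  refine Filter.Eventually.of_forall fun θ => ?_
  simp [Complex.norm_exp_ofReal_mul_I]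

lemma zalc_re (ν : Measure ℝ) (hν : IsProbabilityMeasure ν) (k : ℕ) :
    (∫ θ : ℝ, Complex.exp (θ * Complex.I) ^ k ∂ν).re = ∫ θ : ℝ, Real.cos (k * θ) ∂ν := by
  have := integral_re (𝕜 := ℂ) (zalc_int ν hν k)
  simp only [RCLike.re_eq_complex_re] at this
  rw [← this]
  congr 1 with θ
  rw [← Complex.exp_nat_mul, ← mul_assoc]
  exact_mod_cast Complex.exp_ofReal_mul_I_re (k * θ)

theorem stmt_2 (α : ℝ) (hα₁ : -(1/2 : ℝ) ≤ α) (hα₂ : α < 1) (lam : ℝ) (hlam : 0 < lam)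
    (f : ℂ → ℂ) (hf : f ∈ zalcF α)
    (ν : Measure ℝ) (hν : IsProbabilityMeasure ν) (hνsupp : ν (Set.Icc 0 (2*π))ᶜ = 0)
    (hrep : ∀ z ∈ ball (0:ℂ) 1,
        deriv f z = ∫ θ : ℝ, (1 - Complex.exp (θ * Complex.I) * z) ^ ((2*α - 2 : ℂ)) ∂ν)
    (n : ℕ) (hn : 2 ≤ n) :
    ((lam : ℂ) * (zalcCoeff f n)^2 - zalcCoeff f (2*n - 1)).re ≤
      (lam * (zalcA α n)^2 - 2 * zalcA α (2*n - 1)) *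
        (∫ θ : ℝ, (Real.cos (((n : ℝ) - 1) * θ))^2 ∂ν) + zalcA α (2*n - 1) := by
  obtain ⟨k, rfl⟩ : ∃ k, n = k + 1 := ⟨n - 1, by omega⟩
  rw [show 2 * (k + 1) - 1 = 2 * k + 1 by omega, zalc_coeff α hα₂ f hf.1 ν hν hrep,
    zalc_coeff α hα₂ f hf.1 ν hν hrep]
  have hB := zalc_A_nonneg α hα₂ (2 * k + 1) (by omega)
  have hr := zalc_re ν hν k
  have hr2 := zalc_re ν hν (2 * k)
  set A := zalcA α (k + 1)
  set B := zalcA α (2 * k + 1)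
  set M := ∫ θ : ℝ, Complex.exp (θ * Complex.I) ^ k ∂ν
  set N := ∫ θ : ℝ, Complex.exp (θ * Complex.I) ^ (2 * k) ∂ν
  rw [show (((k + 1 : ℕ) : ℝ) - 1) = k by push_cast; ring]
  have hc1 : Integrable (fun θ : ℝ => Real.cos (k * θ)) ν := by
    refine Integrable.of_bound (C := 1) (Continuous.aestronglyMeasurable (by fun_prop)) ?_
    exact Filter.Eventually.of_forall fun θ => Real.abs_cos_le_one _
  have hc2 : Integrable (fun θ : ℝ => Real.cos (k * θ) ^ 2) ν := by
    refine Integrable.of_bound (C := 1) (Continuous.aestronglyMeasurable (by fun_prop)) ?_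
    refine Filter.Eventually.of_forall fun θ => ?_
    rw [Real.norm_eq_abs, abs_of_nonneg (sq_nonneg _)]
    exact Real.cos_sq_le_one _
  set P := ∫ θ : ℝ, Real.cos (k * θ) ^ 2 ∂ν with hP
  have hN : N.re = 2 * P - 1 := by
    rw [hr2, hP, ← integral_const_mul]
    have : (∫ θ : ℝ, (1:ℝ) ∂ν) = 1 := by simp
    rw [← this, ← integral_sub (hc2.const_mul 2) (integrable_const _)]
    congr 1 with θ
    rw [← Real.cos_two_mul]
    push_cast
    ring_nf
  have hM : M.re ^ 2 ≤ P := by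
    rw [hr]
    set m := ∫ θ : ℝ, Real.cos (k * θ) ∂ν with hm
    have h : 0 ≤ ∫ θ : ℝ, (Real.cos (k * θ) ^ 2 - 2 * m * Real.cos (k * θ) + m ^ 2) ∂ν :=
      integral_nonneg fun θ => by
        have := sq_nonneg (Real.cos (k * θ) - m)
        simp only [Pi.zero_apply]; linarith
    have hs : Integrable (fun θ : ℝ => Real.cos (k * θ) ^ 2 - 2 * m * Real.cos (k * θ)) ν :=
      hc2.sub (hc1.const_mul _)
    rw [integral_add hs (integrable_const _),
      integral_sub hc2 (hc1.const_mul _), integral_const_mul, ← hm, ← hP] at h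
    simp at h
    linarith
  have hre : ((lam : ℂ) * ((A:ℂ) * M) ^ 2 - (B:ℂ) * N).re
      = lam * A ^ 2 * (M.re ^ 2 - M.im ^ 2) - B * N.re := by
    simp [pow_two]; ring
  rw [hre, hN]
  have : lam * A ^ 2 * (M.re ^ 2 - M.im ^ 2) ≤ lam * A ^ 2 * P :=
    mul_le_mul_of_nonneg_left (by nlinarith [sq_nonneg M.im]) (by positivity)
  linarith
end

section
/- Let -1/2 ≤ α < 0. Then the sequence n ↦ C_n(α) is strictly decreasing for n ≥ 3; in particular C_n(α) ≤ C_3(α) = (3/5)·(2α-4)(2α-5)/((2α-2)(2α-3)) for all n ≥ 3. -/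
open Complex Metric Set

/-- `C_n(α) = 2 A_{2n-1}(α) / A_n(α)²`. -/
noncomputable def zalcC (α : ℝ) (n : ℕ) : ℝ :=
  2 * zalcA α (2*n - 1) / (zalcA α n)^2

lemma zalcA_pos (α : ℝ) (h : α < 0) (n : ℕ) : 0 < zalcA α n := by
  unfold zalcA
  have hn : (0:ℝ) ≤ n := Nat.cast_nonneg n
  have h1 : 0 < Real.Gamma ((n:ℝ) + 1 - 2*α) := Real.Gamma_pos_of_pos (by linarith)
  have h2 : 0 < Real.Gamma (2 - 2*α) := Real.Gamma_pos_of_pos (by linarith)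
  positivity

lemma zalcA_succ (α : ℝ) (h : α < 0) (n : ℕ) :
    zalcA α (n+1) = zalcA α n * (((n:ℝ) + 1 - 2*α) / ((n:ℝ) + 1)) := by
  unfold zalcA
  have hn : (0:ℝ) ≤ n := Nat.cast_nonneg n
  have h2 : 0 < Real.Gamma (2 - 2*α) := Real.Gamma_pos_of_pos (by linarith)
  have h3 : ((n+1 : ℕ):ℝ) + 1 - 2*α = ((n:ℝ) + 1 - 2*α) + 1 := by push_cast; ring
  have h4 : ((n:ℝ) + 1 - 2*α) ≠ 0 := by linarith
  rw [h3, Real.Gamma_add_one h4, Nat.factorial_succ]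
  have h5 : (n.factorial : ℝ) ≠ 0 := by positivity
  have h6 : (n:ℝ) + 1 ≠ 0 := by positivity
  push_cast
  field_simp

lemma zalcA_one (α : ℝ) (h : α < 0) : zalcA α 1 = 1 := by
  unfold zalcA
  have h2 : 0 < Real.Gamma (2 - 2*α) := Real.Gamma_pos_of_pos (by linarith)
  have h3 : ((1 : ℕ):ℝ) + 1 - 2*α = 2 - 2*α := by push_cast; ring
  rw [h3]
  simp [h2.ne']

lemma zalcC_succ_lt (α : ℝ) (h : α < 0) (n : ℕ) (hn : 3 ≤ n) :
    zalcC α (n+1) < zalcC α n := by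
  obtain ⟨k, rfl⟩ : ∃ k, n = k + 3 := ⟨n - 3, by omega⟩
  unfold zalcC
  have e1 : 2 * (k + 3 + 1) - 1 = (2 * (k + 3) - 1) + 1 + 1 := by omega
  have e2 : ((2 * (k + 3) - 1 : ℕ) : ℝ) = 2 * (k:ℝ) + 5 := by
    have : 2 * (k + 3) - 1 = 2 * k + 5 := by omega
    rw [this]; push_cast; ring
  rw [e1, zalcA_succ α h (2 * (k + 3) - 1 + 1), zalcA_succ α h (2 * (k + 3) - 1),
    zalcA_succ α h (k + 3)]
  have pa := zalcA_pos α h (2 * (k + 3) - 1)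
  have pb := zalcA_pos α h (k + 3)
  push_cast [e2]
  generalize zalcA α (2 * (k + 3) - 1) = a at *
  generalize zalcA α (k + 3) = c at *
  have hk : (0:ℝ) ≤ k := Nat.cast_nonneg k
  generalize (k:ℝ) = x at *
  obtain ⟨b, rfl⟩ : ∃ b, α = - b / 2 := ⟨-2 * α, by ring⟩
  have hb : 0 < b := by linarith
  have r : ((2 * x + 6 + b) * (2 * x + 7 + b) * (x + 4)^2) /
      ((2 * x + 6) * (2 * x + 7) * (x + 4 + b)^2) < 1 := by
    rw [div_lt_one (by positivity)]
    have : 0 < b * ((x + 4) * (4 * (x+3)^2 - (x+3) - 1)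
        + b * (4*(x+3)^2 + 2*(x+3) - (x+4)^2)) := by
      have h1 : 0 < 4 * (x+3)^2 - (x+3) - 1 := by nlinarith
      have h2 : 0 < 4*(x+3)^2 + 2*(x+3) - (x+4)^2 := by nlinarith
      positivity
    nlinarith
  have key : 2 * (a * ((2 * x + 5 + 1 - 2 * (-b / 2)) / (2 * x + 5 + 1)) *
      ((2 * x + 5 + 1 + 1 - 2 * (-b / 2)) / (2 * x + 5 + 1 + 1))) /
      (c * ((x + 3 + 1 - 2 * (-b / 2)) / (x + 3 + 1)))^2 = (2 * a / c^2) *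
      (((2 * x + 6 + b) * (2 * x + 7 + b) * (x + 4)^2) /
      ((2 * x + 6) * (2 * x + 7) * (x + 4 + b)^2)) := by
    have g1 : 2 * x + 5 + 1 - 2 * (-b / 2) = 2 * x + 6 + b := by ring
    have g2 : 2 * x + 5 + 1 + 1 - 2 * (-b / 2) = 2 * x + 7 + b := by ring
    have g3 : x + 3 + 1 - 2 * (-b / 2) = x + 4 + b := by ring
    have g4 : 2 * x + 5 + 1 = 2 * x + 6 := by ring
    have g5 : 2 * x + 6 + 1 = 2 * x + 7 := by ring
    have g6 : x + 3 + 1 = x + 4 := by ring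
    rw [g1, g2, g3, g4, g5, g6]
    have : x + 4 + b ≠ 0 := by positivity
    have : x + 4 ≠ 0 := by positivity
    have : 2 * x + 6 ≠ 0 := by positivity
    have : 2 * x + 7 ≠ 0 := by positivity
    field_simp
  rw [key]
  exact mul_lt_of_lt_one_right (by positivity) r

theorem stmt_5 (α : ℝ) (hα₁ : -(1/2 : ℝ) ≤ α) (hα₂ : α < 0) :
    (∀ m n : ℕ, 3 ≤ m → m < n → zalcC α n < zalcC α m) ∧
    (∀ n : ℕ, 3 ≤ n → zalcC α n ≤ zalcC α 3) ∧
    zalcC α 3 = (3/5) * ((2*α - 4) * (2*α - 5)) / ((2*α - 2) * (2*α - 3)) := by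
  have lt : ∀ m n : ℕ, 3 ≤ m → m < n → zalcC α n < zalcC α m := by
    intro m n hm hmn
    induction n, hmn using Nat.le_induction with
    | base => exact zalcC_succ_lt α hα₂ m hm
    | succ n hn ih => exact (zalcC_succ_lt α hα₂ n (by omega)).trans ih
  refine ⟨lt, ?_, ?_⟩
  · intro n hn
    rcases hn.eq_or_lt with rfl | h
    · exact le_rfl
    · exact (lt 3 n le_rfl h).le
  · have s1 := zalcA_succ α hα₂ 1
    have s2 := zalcA_succ α hα₂ 2
    have s3 := zalcA_succ α hα₂ 3
    have s4 := zalcA_succ α hα₂ 4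
    norm_num at s1 s2 s3 s4
    rw [zalcA_one α hα₂] at s1
    have d : zalcC α 3 = 2 * zalcA α 5 / (zalcA α 3)^2 := rfl
    rw [d, s4, s3, s2, s1]
    have h1 : 2 * α - 2 ≠ 0 := by linarith
    have h2 : 2 * α - 3 ≠ 0 := by linarith
    have h3 : 1 + 1 - 2 * α ≠ 0 := by linarith
    have h4 : 2 + 1 - 2 * α ≠ 0 := by linarith
    have h5 : 2 - 2 * α ≠ 0 := by linarith
    have h6 : 3 - 2 * α ≠ 0 := by linarith
    have h7 : 1 - α ≠ 0 := by linarith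
    have h8 : α - 1 ≠ 0 := by linarith
    field_simp
    ring
end
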